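/- Let w₀, w₁, w₂, … be elements of W(A, Σ) (closed A-words) such that each w_{i+1} is a nonempty factor of w_i, and let Π₀, Π₁, Π₂, … be the corresponding groups of proper periods. Then the sequence of groups becomes stationary: there exists m with Πₙ = Πₘ for all n ≥ m. -/

import Mathlib

namespace Stmt11

/-- `A = ℤ[t]` as additive group: finitely supported `ℕ → ℤ`. Positivity: the leading
coefficient is positive. -/
def apos (a : ℕ →₀ ℤ) : Prop := ∃ d : ℕ, a.support.max = (d : WithBot ℕ) ∧ 0 < a d

/-- `a ≤ b` iff `a = b` or `b - a` is positive. -/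
def ale (a b : ℕ →₀ ℤ) : Prop := a = b ∨ apos (b - a)

/-- The least positive element `1 = t⁰`. -/
noncomputable def aone : ℕ →₀ ℤ := Finsupp.single 0 1

/-- A closed `A`-word over the alphabet `Γ`: a length `len` together with a labelling of
the interval `[1, len]` (values outside the interval are irrelevant). -/
structure AWord (Γ : Type*) where
  len : ℕ →₀ ℤ
  f : (ℕ →₀ ℤ) → Γ

/-- `v` is a factor of `u`: some shifted copy of `v` occurs inside `u`. -/
def IsFactor {Γ : Type*} (v u : AWord Γ) : Prop :=
  ∃ δ : ℕ →₀ ℤ, ale 0 δ ∧ ale (δ + v.len) u.len ∧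
    ∀ β, ale aone β → ale β v.len → v.f β = u.f (β + δ)

/-- The set of proper periods of a word: periods of degree strictly smaller than the
degree of the word. -/
def properPeriods {Γ : Type*} (u : AWord Γ) : Set (ℕ →₀ ℤ) :=
  {π | π.support.max < u.len.support.max ∧
    ∀ β, ale aone β → ale β u.len → ale aone (β + π) → ale (β + π) u.len →
      u.f β = u.f (β + π)}

/-!
The degree of a word is the archimedean class of its length. It cannot increase along a chain of
factors, and only finitely many degrees lie below a given one: elements of distinct archimedean
classes are linearly independent over `ℤ`, and the elements of smaller degree form a finitely
generated group. So the degree is eventually constant, and from then on a proper period of a word is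
a proper period of each later factor. The groups of proper periods thus increase inside a finitely
generated group, where the ascending chain condition applies. They are groups because, if `β` and
`β + π + ρ` are positions of a word and `|π - ρ|` is at most its length, then `β + π` or `β + ρ` is
a position too.
-/

open ArchimedeanClass (ballAddSubgroup mem_ballAddSubgroup_iff)

section Periods

variable {G Γ : Type*}

/-- `π` is a period of the labelling `f` restricted to `s`: two positions of `s` which differ
by `π` carry the same label. -/
def IsPeriodOn [Add G] (f : G → Γ) (s : Set G) (π : G) : Prop :=
  ∀ β ∈ s, β + π ∈ s → f β = f (β + π)

namespace IsPeriodOn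

theorem zero [AddZeroClass G] (f : G → Γ) (s : Set G) : IsPeriodOn f s 0 := fun β _ _ => by
  rw [add_zero]

theorem neg [AddGroup G] {f : G → Γ} {s : Set G} {π : G} (h : IsPeriodOn f s π) :
    IsPeriodOn f s (-π) := fun β hβ hβπ => by
  simpa using (h (β + -π) hβπ (by simpa using hβ)).symm

theorem of_translate [AddCommSemigroup G] {f g : G → Γ} {s t : Set G} {π δ : G}
    (h : IsPeriodOn f s π) (hmaps : Set.MapsTo (· + δ) t s) (hg : ∀ β ∈ t, g β = f (β + δ)) :
    IsPeriodOn g t π := fun β hβ hβπ => by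
  have hcomm : β + π + δ = β + δ + π := add_right_comm β π δ
  rw [hg β hβ, hg _ hβπ, hcomm]
  exact h _ (hmaps hβ) (hcomm ▸ hmaps hβπ)

end IsPeriodOn

variable [AddCommGroup G] [LinearOrder G] [IsOrderedAddMonoid G]

theorem add_mem_Ioc_or_add_mem_Ioc {β π ρ ℓ : G} (hβ : β ∈ Set.Ioc 0 ℓ)
    (hsum : β + (π + ρ) ∈ Set.Ioc 0 ℓ) (hdist : |π - ρ| ≤ ℓ) :
    β + π ∈ Set.Ioc 0 ℓ ∨ β + ρ ∈ Set.Ioc 0 ℓ := by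
  obtain ⟨hπρ, hρπ⟩ := abs_le.1 hdist
  simp only [Set.mem_Ioc] at *
  grind

theorem IsPeriodOn.add {f : G → Γ} {π ρ ℓ : G} (hπ : IsPeriodOn f (Set.Ioc 0 ℓ) π)
    (hρ : IsPeriodOn f (Set.Ioc 0 ℓ) ρ) (hdist : |π - ρ| ≤ ℓ) :
    IsPeriodOn f (Set.Ioc 0 ℓ) (π + ρ) := fun β hβ hsum => by
  rcases add_mem_Ioc_or_add_mem_Ioc hβ hsum hdist with hmem | hmem
  · rw [← add_assoc] at hsum ⊢
    exact (hπ β hβ hmem).trans (hρ _ hmem hsum)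
  · rw [add_comm π, ← add_assoc] at hsum ⊢
    exact (hρ β hβ hmem).trans (hπ _ hmem hsum)

end Periods

/-- A nonempty closed word over a totally ordered abelian group `G`. As in `AWord`, only the
labels of the positions in `Set.Ioc 0 len` are relevant. -/
structure NonemptyWord (G Γ : Type*) [AddCommGroup G] [LinearOrder G] where
  len : G
  len_pos : 0 < len
  letter : G → Γ

namespace NonemptyWord

variable {G Γ : Type*} [AddCommGroup G] [LinearOrder G]

/-- The factor relation: `v` occurs in `u` shifted by some `δ`. -/
def IsFactor (v u : NonemptyWord G Γ) : Prop :=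
  ∃ δ, 0 ≤ δ ∧ δ + v.len ≤ u.len ∧ ∀ β ∈ Set.Ioc 0 v.len, v.letter β = u.letter (β + δ)

variable [IsOrderedAddMonoid G]

/-- The substitute for the degree of a word: the archimedean class of its length. The order is
reversed, so longer words have smaller classes. -/
def lenClass (u : NonemptyWord G Γ) : ArchimedeanClass G :=
  ArchimedeanClass.mk u.len

theorem mem_ballAddSubgroup_lenClass {u : NonemptyWord G Γ} {π : G} :
    π ∈ ballAddSubgroup u.lenClass ↔ u.lenClass < ArchimedeanClass.mk π :=
  mem_ballAddSubgroup_iff (ArchimedeanClass.mk_eq_top_iff.not.2 u.len_pos.ne')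

theorem abs_lt_len_of_mem_ballAddSubgroup {u : NonemptyWord G Γ} {π : G}
    (hπ : π ∈ ballAddSubgroup u.lenClass) : |π| < u.len := by
  rw [mem_ballAddSubgroup_lenClass, ← ArchimedeanClass.mk_abs] at hπ
  exact ArchimedeanClass.lt_of_mk_lt_mk_of_nonneg hπ u.len_pos.le

/-- The group of proper periods: the periods whose class is strictly above that of the length,
which replaces the condition that their degree is smaller than that of the word. -/
def properPeriods (u : NonemptyWord G Γ) : AddSubgroup G where
  carrier := {π | π ∈ ballAddSubgroup u.lenClass ∧ IsPeriodOn u.letter (Set.Ioc 0 u.len) π}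
  zero_mem' := ⟨zero_mem _, .zero _ _⟩
  neg_mem' h := ⟨neg_mem h.1, h.2.neg⟩
  add_mem' hπ hρ := ⟨add_mem hπ.1 hρ.1,
    hπ.2.add hρ.2 (abs_lt_len_of_mem_ballAddSubgroup (sub_mem hπ.1 hρ.1)).le⟩

theorem mem_properPeriods {u : NonemptyWord G Γ} {π : G} : π ∈ u.properPeriods ↔
    u.lenClass < ArchimedeanClass.mk π ∧ IsPeriodOn u.letter (Set.Ioc 0 u.len) π :=
  and_congr_left' mem_ballAddSubgroup_lenClass

theorem properPeriods_le_ballAddSubgroup (u : NonemptyWord G Γ) :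
    u.properPeriods ≤ ballAddSubgroup u.lenClass := fun _ h => h.1

namespace IsFactor

variable {v u : NonemptyWord G Γ}

theorem lenClass_le (h : v.IsFactor u) : u.lenClass ≤ v.lenClass := by
  obtain ⟨δ, hδ, hlen, -⟩ := h
  exact ArchimedeanClass.mk_antitoneOn v.len_pos.le u.len_pos.le
    ((le_add_of_nonneg_left hδ).trans hlen)

theorem properPeriods_le (h : v.IsFactor u) (hclass : v.lenClass = u.lenClass) :
    u.properPeriods ≤ v.properPeriods := by
  obtain ⟨δ, hδ, hlen, hletter⟩ := h
  rintro π ⟨hπ, hperiod⟩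
  have hmaps : Set.MapsTo (· + δ) (Set.Ioc 0 v.len) (Set.Ioc 0 u.len) := fun β hβ =>
    ⟨add_pos_of_pos_of_nonneg hβ.1 hδ, (add_comm β δ ▸ add_le_add_right hβ.2 δ).trans hlen⟩
  exact ⟨hclass ▸ hπ, hperiod.of_translate hmaps hletter⟩

end IsFactor

end NonemptyWord

section ChainConditions

variable {G : Type*} [AddCommGroup G]

theorem wellFoundedGT_addSubgroup_of_fg [AddGroup.FG G] : WellFoundedGT (AddSubgroup G) := by
  have : Module.Finite ℤ G := Module.Finite.iff_addGroup_fg.2 ‹_›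
  exact AddSubgroup.toIntSubmodule.toOrderEmbedding.wellFoundedGT

theorem exists_forall_ge_eq_of_monotone_of_le_fg {B : AddSubgroup G} [AddGroup.FG B]
    {H : ℕ → AddSubgroup G} (hH : Monotone H) (hB : ∀ n, H n ≤ B) :
    ∃ m, ∀ n ≥ m, H n = H m := by
  have := wellFoundedGT_addSubgroup_of_fg (G := B)
  obtain ⟨m, hm⟩ := WellFoundedGT.monotone_chain_condition
    ⟨fun n => (H n).addSubgroupOf B, fun _ _ h => AddSubgroup.comap_mono (hH h)⟩
  refine ⟨m, fun n hn => ?_⟩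
  simpa only [inf_eq_left.2 (hB _)] using (AddSubgroup.addSubgroupOf_inj.1 (hm n hn)).symm

variable [LinearOrder G] [IsOrderedAddMonoid G]

theorem linearIndependent_int_of_strictMono_mk {ι : Type*} [LinearOrder ι] {a : ι → G}
    (ha : StrictMono fun i => ArchimedeanClass.mk (a i)) (hne : ∀ i, a i ≠ 0) :
    LinearIndependent ℤ a := by
  classical
  rw [linearIndependent_iff']
  intro s k hsum
  by_contra! ⟨i, his, hki⟩
  let t := {j ∈ s | k j ≠ 0}
  have htne : t.Nonempty := ⟨i, Finset.mem_filter.2 ⟨his, hki⟩⟩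
  have hmk : ∀ j ∈ t, ArchimedeanClass.mk (k j • a j) = ArchimedeanClass.mk (a j) :=
    fun j hj => ArchimedeanClass.mk_smul _ (Finset.mem_filter.1 hj).2
  have hmono : StrictMonoOn (ArchimedeanClass.mk ∘ fun j => k j • a j) t := fun j hj l hl hjl => by
    simpa only [Function.comp_apply, hmk j hj, hmk l hl] using ha hjl
  have htsum : ∑ j ∈ t, k j • a j = 0 := by
    rw [← hsum]
    exact Finset.sum_filter_of_ne fun j _ hj hkj => hj (by rw [hkj, zero_smul])
  have hmin := ArchimedeanClass.mk_sum htne hmono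
  rw [htsum, ArchimedeanClass.mk_zero, hmk _ (t.min'_mem htne),
    ArchimedeanClass.top_eq_mk_iff] at hmin
  exact hne _ hmin

theorem finite_Ioi_archimedeanClass_of_fg (c : ArchimedeanClass G)
    [AddGroup.FG (ballAddSubgroup c)] : (Set.Ioi c).Finite := by
  have : Module.Finite ℤ (ballAddSubgroup c) := Module.Finite.iff_addGroup_fg.2 ‹_›
  have hmem (A : Set.Ioo c ⊤) : A.1.out ∈ ballAddSubgroup c :=
    (mem_ballAddSubgroup_iff (A.2.1.trans A.2.2).ne).2 (A.1.mk_out.symm ▸ A.2.1)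
  have hindep : LinearIndependent ℤ fun A : Set.Ioo c ⊤ => A.1.out := by
    refine linearIndependent_int_of_strictMono_mk (fun A B hAB => ?_) fun A => ?_
    · simpa only [ArchimedeanClass.mk_out, Subtype.coe_lt_coe] using hAB
    · rw [Ne, ← ArchimedeanClass.mk_eq_top_iff, ArchimedeanClass.mk_out]
      exact A.2.2.ne
  have hfin : (Set.Ioo c ⊤).Finite := LinearIndependent.finite_of_isNoetherian (R := ℤ)
    (v := fun A => (⟨A.1.out, hmem A⟩ : ballAddSubgroup c))
    (.of_comp (ballAddSubgroup c).subtype.toIntLinearMap hindep)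
  exact (hfin.insert ⊤).subset fun A hA => (eq_or_ne A ⊤).imp id fun h => ⟨hA, h.lt_top⟩

theorem wellFoundedGT_archimedeanClass_of_fg
    (hfg : ∀ c : ArchimedeanClass G, AddGroup.FG (ballAddSubgroup c)) :
    WellFoundedGT (ArchimedeanClass G) := by
  refine ⟨RelEmbedding.wellFounded_iff_isEmpty.2 ⟨fun f => ?_⟩⟩
  have := hfg (f 0)
  have hinj : Function.Injective fun n => f (n + 1) :=
    f.injective.comp (add_left_injective 1)
  have hmem (n : ℕ) : f (n + 1) ∈ Set.Ioi (f 0) := f.map_rel_iff.2 n.succ_pos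
  exact Set.infinite_of_injective_forall_mem hinj hmem (finite_Ioi_archimedeanClass_of_fg (f 0))

end ChainConditions

theorem proper_period_groups_stationary_general {G Γ : Type*} [AddCommGroup G] [LinearOrder G]
    [IsOrderedAddMonoid G] (hfg : ∀ c : ArchimedeanClass G, AddGroup.FG (ballAddSubgroup c))
    {w : ℕ → NonemptyWord G Γ} (hfac : ∀ i, (w (i + 1)).IsFactor (w i)) :
    ∃ m, ∀ n, m ≤ n → (w n).properPeriods = (w m).properPeriods := by
  have := wellFoundedGT_archimedeanClass_of_fg hfg
  obtain ⟨N, hN⟩ := WellFoundedGT.monotone_chain_condition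
    ⟨fun i => (w i).lenClass, monotone_nat_of_le_succ fun i => (hfac i).lenClass_le⟩
  have hclass (i : ℕ) : (w (N + i)).lenClass = (w N).lenClass := (hN _ (N.le_add_right i)).symm
  have hmono : Monotone fun i => (w (N + i)).properPeriods := monotone_nat_of_le_succ fun i =>
    (hfac (N + i)).properPeriods_le ((hclass (i + 1)).trans (hclass i).symm)
  have hball (i : ℕ) : (w (N + i)).properPeriods ≤ ballAddSubgroup (w N).lenClass :=
    hclass i ▸ (w (N + i)).properPeriods_le_ballAddSubgroup
  have := hfg (w N).lenClass
  obtain ⟨m, hm⟩ := exists_forall_ge_eq_of_monotone_of_le_fg hmono hball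
  refine ⟨N + m, fun n hn => ?_⟩
  obtain ⟨k, rfl⟩ := Nat.exists_eq_add_of_le hn
  rw [add_assoc]
  exact hm (m + k) (m.le_add_right k)

section Colex

variable {α N : Type*} [LinearOrder α]

theorem apply_eq_zero_of_max_support_lt [Zero N] {a : α →₀ N} {i : α}
    (h : a.support.max < i) : a i = 0 :=
  Finsupp.notMem_support_iff.1 (Finset.notMem_of_max_lt_coe h)

theorem toColex_lt_toColex_of_max_support_le [Zero N] [LT N] {a b : α →₀ N} {i : α}
    (ha : a.support.max ≤ i) (hb : b.support.max ≤ i) (hi : a i < b i) :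
    toColex a < toColex b := by
  refine Finsupp.Colex.lt_iff.2 ⟨i, fun j hj => ?_, hi⟩
  have hij : (i : WithBot α) < j := WithBot.coe_lt_coe.2 hj
  exact (apply_eq_zero_of_max_support_lt (ha.trans_lt hij)).trans
    (apply_eq_zero_of_max_support_lt (hb.trans_lt hij)).symm

theorem toColex_pos_iff [Zero N] [Preorder N] {a : α →₀ N} :
    0 < toColex a ↔ ∃ i : α, a.support.max = i ∧ 0 < a i := by
  refine ⟨fun h => ?_, fun ⟨i, hmax, hi⟩ =>
    toColex_lt_toColex_of_max_support_le (a := 0) (by simp) hmax.le hi⟩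
  obtain ⟨i, hzero, hi⟩ := Finsupp.Colex.lt_iff.1 h
  have hle : a.support.max ≤ i := Finset.max_le fun j hj => WithBot.coe_le_coe.2 <|
    not_lt.1 fun hij => Finsupp.mem_support_iff.1 hj (hzero j hij).symm
  exact ⟨i, hle.antisymm (Finset.le_max (Finsupp.mem_support_iff.2 hi.ne')), hi⟩

theorem max_support_le_of_toColex_le [Zero N] [LinearOrder N] {a b : α →₀ N}
    (ha : 0 ≤ toColex a) (hab : toColex a ≤ toColex b) : a.support.max ≤ b.support.max := by
  rcases ha.eq_or_lt with hzero | hpos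
  · simp [← toColex_inj.1 hzero]
  obtain ⟨i, hmax, hi⟩ := toColex_pos_iff.1 hpos
  by_contra! hlt
  rw [hmax] at hlt
  rw [← apply_eq_zero_of_max_support_lt hlt] at hi
  exact hab.not_gt (toColex_lt_toColex_of_max_support_le hlt.le hmax.le hi)

theorem support_ofColex_abs [AddCommGroup N] [LinearOrder N] (a : Colex (α →₀ N)) :
    (ofColex |a|).support = (ofColex a).support := by
  rcases abs_choice a with h | h <;> simp [h, Finsupp.support_neg]

variable [AddCommGroup N] [LinearOrder N] [IsOrderedAddMonoid N] [Archimedean N]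

theorem mk_toColex_le_mk_toColex_iff_of_nonneg {a b : α →₀ N}
    (ha : 0 ≤ toColex a) (hb : 0 ≤ toColex b) :
    ArchimedeanClass.mk (toColex b) ≤ ArchimedeanClass.mk (toColex a) ↔
      a.support.max ≤ b.support.max := by
  rw [ArchimedeanClass.mk_le_mk, abs_of_nonneg ha, abs_of_nonneg hb]
  refine ⟨fun ⟨n, hn⟩ => ?_, fun hab => ?_⟩
  · exact (max_support_le_of_toColex_le ha hn).trans
      (Finset.max_mono (Finsupp.support_smul (b := n) (g := b)))
  rcases hb.eq_or_lt with hzero | hpos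
  · obtain rfl : b = 0 := (toColex_inj.1 hzero).symm
    obtain rfl : a = 0 := by
      simpa only [Finsupp.support_zero, Finset.max_empty, le_bot_iff, Finset.max_eq_bot,
        Finsupp.support_eq_empty] using hab
    exact ⟨0, by simp⟩
  · obtain ⟨i, hmax, hi⟩ := toColex_pos_iff.1 hpos
    obtain ⟨n, hn⟩ := exists_lt_nsmul hi (a i)
    exact ⟨n, (toColex_lt_toColex_of_max_support_le (hab.trans hmax.le)
      ((Finset.max_mono Finsupp.support_smul).trans hmax.le) hn).le⟩

theorem mk_toColex_le_mk_toColex_iff {a b : α →₀ N} :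
    ArchimedeanClass.mk (toColex b) ≤ ArchimedeanClass.mk (toColex a) ↔
      a.support.max ≤ b.support.max := by
  rw [← ArchimedeanClass.mk_abs (toColex a), ← ArchimedeanClass.mk_abs (toColex b),
    ← ofColex_toColex a, ← ofColex_toColex b, ← support_ofColex_abs (toColex a),
    ← support_ofColex_abs (toColex b)]
  exact mk_toColex_le_mk_toColex_iff_of_nonneg (abs_nonneg (toColex a)) (abs_nonneg (toColex b))

theorem max_support_le_of_mem_ballAddSubgroup {a b : Colex (α →₀ N)}
    (hb : b ∈ ballAddSubgroup (ArchimedeanClass.mk a)) :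
    (ofColex b).support.max ≤ (ofColex a).support.max := by
  refine mk_toColex_le_mk_toColex_iff.1 ?_
  by_cases ha : ArchimedeanClass.mk a = ⊤
  · rw [ha, ArchimedeanClass.ballAddSubgroup_top, AddSubgroup.mem_bot] at hb
    simp [hb]
  · exact ((mem_ballAddSubgroup_iff ha).1 hb).le

theorem fg_ballAddSubgroup_colex [LocallyFiniteOrderBot α] [AddGroup.FG N]
    (c : ArchimedeanClass (Colex (α →₀ N))) : AddGroup.FG (ballAddSubgroup c) := by
  have : Module.Finite ℤ N := Module.Finite.iff_addGroup_fg.2 ‹_›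
  induction c using ArchimedeanClass.ind with | mk a =>
  let s : Finset α := (ofColex a).support.biUnion Finset.Iic
  have hmem (b : ballAddSubgroup (ArchimedeanClass.mk a)) :
      ofColex b.1 ∈ Finsupp.supported N ℤ (s : Set α) := fun j hj => by
    obtain ⟨i, hi, hji⟩ := WithBot.coe_le_iff.1 <|
      (Finset.le_max hj).trans (max_support_le_of_mem_ballAddSubgroup b.2)
    exact Finset.mem_biUnion.2 ⟨i, Finset.mem_of_max hi, Finset.mem_Iic.2 hji⟩
  have : Module.Finite ℤ (Finsupp.supported N ℤ (s : Set α)) :=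
    .equiv (Finsupp.supportedEquivFinsupp (s : Set α)).symm
  let toSupported : ballAddSubgroup (ArchimedeanClass.mk a) →+ Finsupp.supported N ℤ (s : Set α) :=
    .mk' (fun b => ⟨ofColex b.1, hmem b⟩) fun _ _ => rfl
  have hinj : Function.Injective toSupported :=
    .of_comp (f := Subtype.val) (ofColex.injective.comp Subtype.val_injective)
  exact Module.Finite.iff_addGroup_fg.1 (.of_injective toSupported.toIntLinearMap hinj)

end Colex

section AWord

theorem apos_iff {a : ℕ →₀ ℤ} : apos a ↔ 0 < toColex a := toColex_pos_iff.symm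

theorem ale_iff {a b : ℕ →₀ ℤ} : ale a b ↔ toColex a ≤ toColex b := by
  rw [ale, apos_iff, toColex_sub, sub_pos, le_iff_eq_or_lt, toColex_inj]

theorem aone_ale_iff {a : ℕ →₀ ℤ} : ale aone a ↔ 0 < toColex a := by
  have hmax : aone.support.max ≤ (0 : ℕ) := Finset.max_mono Finsupp.support_single_subset
  have hzero {l : ℕ} (hl : 0 < l) : aone l = 0 := Finsupp.single_eq_of_ne hl.ne'
  rw [ale_iff]
  refine ⟨lt_of_lt_of_le (toColex_lt_toColex_of_max_support_le (a := 0) (by simp) hmax ?_),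
    fun h => ?_⟩
  · simp [aone]
  obtain ⟨i, hi, hpos⟩ := toColex_pos_iff.1 h
  rcases i.eq_zero_or_pos with rfl | h0i
  · refine Finsupp.toColex_monotone fun l => ?_
    rcases l.eq_zero_or_pos with rfl | hl
    · simpa [aone] using Int.add_one_le_of_lt hpos
    · rw [hzero hl, apply_eq_zero_of_max_support_lt (hi.trans_lt (WithBot.coe_lt_coe.2 hl))]
  · exact (toColex_lt_toColex_of_max_support_le (hmax.trans (WithBot.coe_le_coe.2 h0i.le)) hi.le
      (hzero h0i ▸ hpos)).le

variable {Γ : Type*} {u v : AWord Γ}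

/-- A nonempty `AWord` as a word over `Colex (ℕ →₀ ℤ)`: comparing leading coefficients on `ℤ[t]`
is the colexicographic order. -/
def AWord.toNonemptyWord (u : AWord Γ) (hu : ale aone u.len) :
    NonemptyWord (Colex (ℕ →₀ ℤ)) Γ where
  len := toColex u.len
  len_pos := aone_ale_iff.1 hu
  letter β := u.f (ofColex β)

theorem IsFactor.toNonemptyWord (h : IsFactor v u) (hv : ale aone v.len) (hu : ale aone u.len) :
    (v.toNonemptyWord hv).IsFactor (u.toNonemptyWord hu) := by
  obtain ⟨δ, hδ, hlen, hletter⟩ := h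
  refine ⟨toColex δ, ale_iff.1 hδ, ale_iff.1 hlen, fun β hβ => ?_⟩
  exact hletter (ofColex β) (aone_ale_iff.2 hβ.1) (ale_iff.2 hβ.2)

theorem preimage_properPeriods_toNonemptyWord (hu : ale aone u.len) :
    toColex ⁻¹' (u.toNonemptyWord hu).properPeriods = properPeriods u := by
  ext π
  have hdeg : ArchimedeanClass.mk (toColex u.len) < ArchimedeanClass.mk (toColex π) ↔
      π.support.max < u.len.support.max := by
    rw [← not_le, mk_toColex_le_mk_toColex_iff, not_le]
  rw [Set.mem_preimage, SetLike.mem_coe, NonemptyWord.mem_properPeriods]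
  refine and_congr hdeg ⟨fun h β h₁ h₂ h₃ h₄ => ?_, fun h β hβ hβπ => ?_⟩
  · exact h (toColex β) ⟨aone_ale_iff.1 h₁, ale_iff.1 h₂⟩ ⟨aone_ale_iff.1 h₃, ale_iff.1 h₄⟩
  · exact h (ofColex β) (aone_ale_iff.2 hβ.1) (ale_iff.2 hβ.2) (aone_ale_iff.2 hβπ.1)
      (ale_iff.2 hβπ.2)

end AWord

/-- If `w₀, w₁, w₂, …` are closed `A`-words (`A = ℤ[t]`) such that
each `w_{i+1}` is a nonempty factor of `w_i`, then the corresponding sequence of groups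
of proper periods becomes stationary. -/
theorem proper_period_groups_stationary {Γ : Type*} (w : ℕ → AWord Γ)
    (hne : ∀ i, ale aone (w i).len)
    (hfac : ∀ i, IsFactor (w (i + 1)) (w i)) :
    ∃ m, ∀ n, m ≤ n → properPeriods (w n) = properPeriods (w m) := by
  obtain ⟨m, hm⟩ := proper_period_groups_stationary_general
    (w := fun i => (w i).toNonemptyWord (hne i)) fg_ballAddSubgroup_colex
    fun i => (hfac i).toNonemptyWord (hne (i + 1)) (hne i)
  exact ⟨m, fun n hn => by simp only [← preimage_properPeriods_toNonemptyWord (hne _), hm n hn]⟩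

end Stmt11
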